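/- For every dimension n there is a constant C(n) such that for every Riemannian metric g on the n-dimensional torus T^n, the systole satisfies Sys(T^n, g) ≤ C(n) · Vol(T^n, g)^{1/n}. -/

import Mathlib

/-!
Formalization of a statement from L. Guth, "Systolic inequalities and minimal hypersurfaces"
(arXiv:0903.5299).

Since Mathlib does not have Riemannian metrics, a Riemannian metric `g` on a closed manifold
is encoded by its geodesic distance function: a (length/intrinsic) metric space structure.
Lengths of curves are computed from the distance as the total variation, which for the geodesic
distance of a Riemannian metric agrees with the Riemannian length.  The `d`-dimensional
Riemannian volume is encoded as the `d`-dimensional Hausdorff measure (with the normalization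
constant `ω_d/2^d` making it agree with the Riemannian volume on `d`-dimensional Riemannian
submanifolds).
-/

open MeasureTheory Metric Set
open scoped ENNReal

noncomputable section

/-- The length (total variation, i.e. arclength) of a path in an (extended) metric space.
For a path in a Riemannian manifold, computing it with respect to the geodesic distance
gives the Riemannian length of the path. -/
def pathLength {X : Type} [PseudoEMetricSpace X] {x y : X} (γ : Path x y) : ℝ≥0∞ :=
  eVariationOn (fun t => γ t) Set.univ

/-- A metric is a length (intrinsic) metric: the distance between two points is the infimum
of the lengths of paths joining them.  The geodesic distance of a Riemannian metric is a
length metric. -/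
def IsLengthMetric (X : Type) [PseudoEMetricSpace X] : Prop :=
  ∀ x y : X, edist x y = ⨅ γ : Path x y, pathLength γ

/-- The systole of a space: the infimum of the lengths of all non-contractible closed curves. -/
def systole (X : Type) [PseudoEMetricSpace X] : ℝ≥0∞ :=
  ⨅ (x : X) (γ : Path x x) (_ : ¬γ.Homotopic (Path.refl x)), pathLength γ

/-- The volume `ω_d = π^(d/2)/Γ(d/2+1)` of the Euclidean unit ball in dimension `d`. -/
def unitBallVolume (d : ℕ) : ℝ≥0∞ :=
  ENNReal.ofReal (Real.pi ^ ((d : ℝ) / 2) / Real.Gamma ((d : ℝ) / 2 + 1))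

/-- The `d`-dimensional Riemannian volume of a subset of a metric space: the `d`-dimensional
Hausdorff measure, normalized (à la Federer, by `ω_d/2^d`) so that it agrees with the
Riemannian volume on `d`-dimensional Riemannian manifolds and their `d`-dimensional
submanifolds. -/
def rvol (d : ℕ) {X : Type} [EMetricSpace X] [MeasurableSpace X] [BorelSpace X]
    (s : Set X) : ℝ≥0∞ :=
  (unitBallVolume d / 2 ^ d) * μH[(d : ℝ)] s

/-- The standard topological `n`-torus `(ℝ/ℤ)ⁿ`. -/
abbrev Torus (n : ℕ) : Type := Fin n → AddCircle (1 : ℝ)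

/-!
If every ball of radius `R` in `M` has `n`-dimensional Hausdorff measure much smaller than `R ^ n`,
then `M` is covered by pieces of radius at most `2 * R` in `n` colors, pieces of equal color being
separated. This goes by induction on the dimension. Among the closed sets cutting `M` into pieces of
radius at most `R`, an almost minimal one has small area in balls of radius `R / 2`: otherwise
exchange its part inside a ball for a sphere, whose area is small by Eilenberg's inequality. The
pieces get the first color, and the induction hypothesis colors the cut.

Such a covering has too few colors to be lifted to `ℝⁿ`. For each color `i` send a point of `M` to
the center of the `i`-th piece near it. If the systole exceeds `4 * R`, this map lifts uniquely to a
`ℤⁿ`-equivariant self-map of `ℝⁿ`; the `i`-th coordinates of these lifts form an equivariant map `g`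
one of whose coordinates is constant near any given point. After mollification the Jacobian
determinant of `g` vanishes identically. But the integral of the Jacobian of an equivariant map over
the unit cube is the volume of the cube: along `x + t • p x` with `p` periodic it is a polynomial in
`t`, constant for small `t` by the change of variables formula.
-/

open Filter Topology
open scoped NNReal

section Eilenberg

variable {X : Type*} [EMetricSpace X] {f : X → ℝ} {K : ℝ≥0} {d : ℝ}

/-- The `d`-dimensional content, read off a covering `t` of a set `A`, of the part of `A` lying in
the fiber of `f` over `r`. Images are replaced by measurable hulls to make it measurable in `r`. -/
def fiberContent (d : ℝ) (f : X → ℝ) (t : ℕ → Set X) (r : ℝ) : ℝ≥0∞ :=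
  ∑' i, (toMeasurable volume (f '' t i)).indicator (fun _ => ediam (t i) ^ d) r

lemma measurable_fiberContent (t : ℕ → Set X) : Measurable (fiberContent d f t) :=
  Measurable.tsum fun _ => measurable_const.indicator (measurableSet_toMeasurable _ _)

lemma volume_image_le_mul_ediam (hf : LipschitzWith K f) (s : Set X) :
    volume (f '' s) ≤ K * ediam s :=
  (Real.volume_le_diam _).trans (hf.ediam_image_le s)

lemma lintegral_fiberContent_le (hf : LipschitzWith K f) (hd : 0 ≤ d) (t : ℕ → Set X) :
    ∫⁻ r, fiberContent d f t r ≤ K * ∑' i, ⨆ _ : (t i).Nonempty, ediam (t i) ^ (d + 1) := by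
  simp only [fiberContent]
  rw [lintegral_tsum fun i =>
      (measurable_const.indicator (measurableSet_toMeasurable _ _)).aemeasurable,
    ← ENNReal.tsum_mul_left]
  refine ENNReal.tsum_le_tsum fun i => ?_
  rw [lintegral_indicator_const (measurableSet_toMeasurable _ _), measure_toMeasurable]
  rcases (t i).eq_empty_or_nonempty with hempty | hne
  · simp [hempty]
  calc ediam (t i) ^ d * volume (f '' t i)
      ≤ ediam (t i) ^ d * (K * ediam (t i)) := by gcongr; exact volume_image_le_mul_ediam hf _
    _ = K * ediam (t i) ^ (d + 1) := by
        rw [ENNReal.rpow_add_of_nonneg _ _ hd zero_le_one, ENNReal.rpow_one]; ring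
    _ = K * ⨆ _ : (t i).Nonempty, ediam (t i) ^ (d + 1) := by rw [iSup_pos hne]

variable [MeasurableSpace X] [BorelSpace X]

lemma exists_cover_tsum_ediam_rpow_le {A : Set X} (hA : μH[d] A ≠ ∞) {ε : ℝ≥0∞} (hε : ε ≠ 0) :
    ∃ t : ℕ → Set X, A ⊆ ⋃ i, t i ∧ (∀ i, ediam (t i) ≤ ε) ∧
      ∑' i, ⨆ _ : (t i).Nonempty, ediam (t i) ^ d ≤ μH[d] A + ε := by
  have hinf : (⨅ (t : ℕ → Set X) (_ : A ⊆ ⋃ i, t i) (_ : ∀ i, ediam (t i) ≤ ε),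
      ∑' i, ⨆ _ : (t i).Nonempty, ediam (t i) ^ d) < μH[d] A + ε := by
    refine lt_of_le_of_lt ?_ (ENNReal.lt_add_right hA hε)
    rw [Measure.hausdorffMeasure_apply]
    exact le_iSup₂_of_le ε (pos_iff_ne_zero.2 hε) le_rfl
  simp only [iInf_lt_iff] at hinf
  obtain ⟨t, hcover, hdiam, hsum⟩ := hinf
  exact ⟨t, hcover, hdiam, hsum.le⟩

lemma hausdorffMeasure_inter_fiber_le_liminf (hd : 0 ≤ d) {A : Set X} {t : ℕ → ℕ → Set X}
    {ε : ℕ → ℝ≥0∞} (hε : Tendsto ε atTop (𝓝 0)) (hcover : ∀ j, A ⊆ ⋃ i, t j i)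
    (hdiam : ∀ j i, ediam (t j i) ≤ ε j) (r : ℝ) :
    μH[d] (A ∩ f ⁻¹' {r}) ≤ liminf (fun j => fiberContent d f (t j) r) atTop := by
  have hcontent := Measure.hausdorffMeasure_le_liminf_tsum (l := atTop)
    (ι := fun j => {i // (t j i ∩ f ⁻¹' {r}).Nonempty}) d (A ∩ f ⁻¹' {r}) ε hε
    (fun j i => t j i ∩ f ⁻¹' {r})
    (.of_forall fun j i => (ediam_mono inter_subset_left).trans (hdiam j i))
    (.of_forall fun j y ⟨hyA, hyr⟩ =>
      have ⟨i, hi⟩ := mem_iUnion.1 (hcover j hyA)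
      mem_iUnion.2 ⟨⟨i, y, hi, hyr⟩, hi, hyr⟩)
  refine hcontent.trans (liminf_le_liminf (.of_forall fun j => ?_))
  refine le_trans (ENNReal.tsum_le_tsum fun i => ?_)
    (ENNReal.tsum_comp_le_tsum_of_injective Subtype.val_injective _)
  obtain ⟨i, y, hy, hyr⟩ := i
  have hr : r ∈ toMeasurable volume (f '' t j i) := subset_toMeasurable _ _ ⟨y, hy, hyr⟩
  rw [indicator_of_mem hr]
  exact ENNReal.rpow_le_rpow (ediam_mono inter_subset_left) hd

lemma lintegral_hausdorffMeasure_inter_fiber_le_of_ne_top (hf : LipschitzWith K f) (hd : 0 ≤ d)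
    {A : Set X} (hA : μH[d + 1] A ≠ ∞) :
    ∫⁻ r, μH[d] (A ∩ f ⁻¹' {r}) ≤ K * μH[d + 1] A := by
  let ε : ℕ → ℝ≥0∞ := fun j => (j : ℝ≥0∞)⁻¹
  have hε : Tendsto ε atTop (𝓝 0) := ENNReal.tendsto_inv_nat_nhds_zero
  choose t hcover hdiam hsum using fun j : ℕ => exists_cover_tsum_ediam_rpow_le hA
    (ENNReal.inv_ne_zero.2 (ENNReal.natCast_ne_top j))
  have hlim : Tendsto (fun j => (K : ℝ≥0∞) * (μH[d + 1] A + ε j)) atTop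
      (𝓝 (K * (μH[d + 1] A + 0))) :=
    ENNReal.Tendsto.const_mul (tendsto_const_nhds.add hε) (Or.inr ENNReal.coe_ne_top)
  calc ∫⁻ r, μH[d] (A ∩ f ⁻¹' {r})
      ≤ ∫⁻ r, liminf (fun j => fiberContent d f (t j) r) atTop :=
        lintegral_mono (hausdorffMeasure_inter_fiber_le_liminf hd hε hcover hdiam)
    _ ≤ liminf (fun j => ∫⁻ r, fiberContent d f (t j) r) atTop :=
        lintegral_liminf_le fun j => measurable_fiberContent (t j)
    _ ≤ liminf (fun j => K * (μH[d + 1] A + ε j)) atTop :=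
        liminf_le_liminf <| .of_forall fun j =>
          (lintegral_fiberContent_le hf hd (t j)).trans (mul_le_mul_right (hsum j) _)
    _ = K * μH[d + 1] A := by rw [hlim.liminf_eq, add_zero]

/-- **Eilenberg's inequality** for real-valued Lipschitz functions. -/
theorem lintegral_hausdorffMeasure_inter_fiber_le (hf : LipschitzWith K f) (hd : 0 ≤ d)
    (A : Set X) : ∫⁻ r, μH[d] (A ∩ f ⁻¹' {r}) ≤ K * μH[d + 1] A := by
  by_cases hA : μH[d + 1] A = ∞
  · rcases eq_or_ne K 0 with rfl | hK
    · suffices ∀ᵐ r : ℝ, μH[d] (A ∩ f ⁻¹' {r}) = 0 by simp [lintegral_congr_ae this]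
      obtain ⟨c, hc⟩ : ∃ c, ∀ x, f x = c := by
        rcases isEmpty_or_nonempty X with hX | ⟨⟨x₀⟩⟩
        · exact ⟨0, hX.elim⟩
        · exact ⟨f x₀, fun x => edist_le_zero.1 (by simpa using hf x x₀)⟩
      filter_upwards [compl_mem_ae_iff.2 (measure_singleton c)] with r hr
      have hfiber : f ⁻¹' {r} = ∅ :=
        eq_empty_of_forall_notMem fun x hx => hr (Eq.trans (Eq.symm hx) (hc x))
      simp [hfiber]
    · simp [hA, hK]
  · exact lintegral_hausdorffMeasure_inter_fiber_le_of_ne_top hf hd hA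

end Eilenberg

lemma exists_radius_hausdorffMeasure_inter_sphere_lt {M : Type*} [MetricSpace M]
    [MeasurableSpace M] [BorelSpace M] {d : ℝ} (hd : 0 ≤ d) {A : Set M} {x : M} {s R : ℝ}
    {a : ℝ≥0∞} (h : μH[d + 1] (A ∩ ball x R) < a * ENNReal.ofReal (R - s)) :
    ∃ r ∈ Ioo s R, μH[d] (A ∩ sphere x r) < a := by
  by_contra! hlarge
  refine h.not_ge ?_
  calc a * ENNReal.ofReal (R - s) = ∫⁻ _ in Ioo s R, a := by simp
    _ ≤ ∫⁻ r in Ioo s R, μH[d] ((A ∩ ball x R) ∩ (dist · x) ⁻¹' {r}) :=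
        setLIntegral_mono' measurableSet_Ioo fun r hr => (hlarge r hr).trans <|
          measure_mono fun y ⟨hyA, hyr⟩ => ⟨⟨hyA, (mem_sphere.1 hyr).trans_lt hr.2⟩, hyr⟩
    _ ≤ ∫⁻ r, μH[d] ((A ∩ ball x R) ∩ (dist · x) ⁻¹' {r}) := setLIntegral_le_lintegral _ _
    _ ≤ μH[d + 1] (A ∩ ball x R) := by
        simpa using lintegral_hausdorffMeasure_inter_fiber_le (LipschitzWith.dist_left x) hd _

section Cut

variable {M : Type*} [MetricSpace M] {X Z : Set M} {R : ℝ}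

/-- `Z` is a closed subset of `X` whose complement in `X` splits into relatively open pieces of
radius at most `R`. The splitting is encoded by a map, locally constant on `X \ Z`, sending each
point to the center of its piece. -/
structure IsCut (X Z : Set M) (R : ℝ) : Prop where
  isClosed : IsClosed Z
  subset : Z ⊆ X
  exists_center : ∃ c : M → M, (∀ y ∈ X, dist y (c y) ≤ R) ∧
    ∀ y ∈ X \ Z, ∀ᶠ y' in 𝓝[X] y, c y' = c y

namespace IsCut

lemma refl (hX : IsClosed X) (hR : 0 ≤ R) : IsCut X X R where
  isClosed := hX
  subset := subset_rfl
  exists_center := ⟨id, by simpa using fun _ _ => hR, by simp⟩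

-- The ball becomes a new piece, centered at `x`.
lemma replace_ball (h : IsCut X Z R) (hX : IsClosed X) (x : M) {r : ℝ} (hr : r ≤ R) :
    IsCut X ((Z \ ball x r) ∪ (X ∩ sphere x r)) R where
  isClosed := (h.isClosed.sdiff isOpen_ball).union (hX.inter isClosed_sphere)
  subset := union_subset (sdiff_subset.trans h.subset) inter_subset_left
  exists_center := by
    classical
    obtain ⟨c, hdist, hloc⟩ := h.exists_center
    refine ⟨(ball x r).piecewise (fun _ => x) c, fun y hy => ?_, fun y ⟨hyX, hy⟩ => ?_⟩
    · by_cases hyr : y ∈ ball x r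
      · simpa [hyr] using (mem_ball.1 hyr).le.trans hr
      · simpa [hyr] using hdist y hy
    have hne : dist y x ≠ r := fun hyr => hy (Or.inr ⟨hyX, hyr⟩)
    rcases hne.lt_or_gt with hlt | hgt
    · filter_upwards [nhdsWithin_le_nhds (isOpen_ball.mem_nhds hlt)] with y' hy'
      rw [piecewise_eq_of_mem _ _ _ hy', piecewise_eq_of_mem _ _ _ (mem_ball.2 hlt)]
    · have hyZ : y ∉ Z := fun hz => hy (Or.inl ⟨hz, by simpa using hgt.le⟩)
      have hout : (closedBall x r)ᶜ ∈ 𝓝 y := isClosed_closedBall.isOpen_compl.mem_nhds (by simpa)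
      filter_upwards [hloc y ⟨hyX, hyZ⟩, nhdsWithin_le_nhds hout] with y' hc hy'
      rw [piecewise_eq_of_notMem _ _ _ fun h' => hy' (ball_subset_closedBall h'),
        piecewise_eq_of_notMem _ _ _ (by simpa using hgt.le), hc]

lemma exists_inter_biUnion_ball_subset (hX : IsClosed X) (hR : 0 ≤ R) {r : M → ℝ}
    (hr : ∀ x, r x ≤ R) (s : Finset M) :
    ∃ Z, IsCut X Z R ∧ Z ∩ (⋃ x ∈ s, ball x (r x)) ⊆ ⋃ x ∈ s, X ∩ sphere x (r x) := by
  classical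
  induction s using Finset.induction_on with
  | empty => exact ⟨X, refl hX hR, by simp⟩
  | insert a s _ ih =>
    obtain ⟨Z, hZ, hZs⟩ := ih
    refine ⟨_, hZ.replace_ball hX a (hr a), ?_⟩
    simp only [Finset.set_biUnion_insert]
    rintro z ⟨⟨hzZ, hza⟩ | hz, hzb⟩
    · exact Or.inr (hZs ⟨hzZ, hzb.resolve_left hza⟩)
    · exact Or.inl hz

variable [MeasurableSpace M] (μ : Measure M)

lemma exists_measure_lt_top (hX : IsCompact X) (hR : 0 ≤ R) {r : M → ℝ}
    (hr : ∀ x, r x ∈ Ioc 0 R) (hμ : ∀ x, μ (X ∩ sphere x (r x)) < ∞) :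
    ∃ Z, IsCut X Z R ∧ μ Z < ∞ := by
  obtain ⟨s, hs⟩ := hX.elim_finite_subcover (fun x => ball x (r x)) (fun _ => isOpen_ball)
    fun x _ => mem_iUnion.2 ⟨x, mem_ball_self (hr x).1⟩
  obtain ⟨Z, hZ, hZs⟩ := exists_inter_biUnion_ball_subset hX.isClosed hR (fun x => (hr x).2) s
  refine ⟨Z, hZ, ?_⟩
  have hsub : Z ⊆ ⋃ x ∈ s, X ∩ sphere x (r x) := fun z hz => hZs ⟨hz, hs (hZ.subset hz)⟩
  exact (measure_mono hsub).trans_lt (measure_biUnion_lt_top s.finite_toSet fun x _ => hμ x)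

lemma exists_almost_minimal {Z₀ : Set M} (hZ₀ : IsCut X Z₀ R) (hμ : μ Z₀ < ∞) {a : ℝ≥0∞}
    (ha : a ≠ 0) :
    ∃ Z, IsCut X Z R ∧ μ Z < ∞ ∧ ∀ Z', IsCut X Z' R → μ Z ≤ μ Z' + a := by
  let m := ⨅ (Z : Set M) (_ : IsCut X Z R), μ Z
  have hm : ∀ Z, IsCut X Z R → m ≤ μ Z := fun Z hZ => iInf₂_le Z hZ
  have hlt : m < m + a := ENNReal.lt_add_right ((hm Z₀ hZ₀).trans_lt hμ).ne ha
  obtain ⟨Z, hZ, hZm⟩ := by simpa only [m, iInf_lt_iff] using hlt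
  exact ⟨Z, hZ, hZm.trans_le le_top, fun W hW => hZm.le.trans (add_le_add_left (hm W hW) a)⟩

-- Compare `Z` with the cut obtained by replacing its part inside the ball by the sphere.
lemma measure_inter_ball_le [BorelSpace M] {μ : Measure M} (hX : IsClosed X) (hZ : IsCut X Z R)
    (hμ : μ Z < ∞) {a : ℝ≥0∞} (hmin : ∀ Z', IsCut X Z' R → μ Z ≤ μ Z' + a) (x : M) {r : ℝ}
    (hr : r ≤ R) : μ (Z ∩ ball x r) ≤ μ (X ∩ sphere x r) + a := by
  have hfin : μ (Z \ ball x r) ≠ ∞ := measure_ne_top_of_subset sdiff_subset hμ.ne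
  refine (ENNReal.add_le_add_iff_left hfin).1 ?_
  calc μ (Z \ ball x r) + μ (Z ∩ ball x r) = μ Z := by
        rw [add_comm, measure_inter_add_sdiff Z measurableSet_ball]
    _ ≤ μ ((Z \ ball x r) ∪ (X ∩ sphere x r)) + a := hmin _ (hZ.replace_ball hX x hr)
    _ ≤ μ (Z \ ball x r) + (μ (X ∩ sphere x r) + a) := by
        rw [← add_assoc]; gcongr; exact measure_union_le _ _

lemma exists_hausdorffMeasure_inter_ball_le [BorelSpace M] {d : ℝ} (hd : 0 ≤ d)
    (hX : IsCompact X) (hR : 0 ≤ R) {s : ℝ} (hs : 0 ≤ s) {a : ℝ≥0∞} (ha₀ : a ≠ 0)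
    (ha : a ≠ ∞) (h : ∀ x, μH[d + 1] (X ∩ ball x R) < a * ENNReal.ofReal (R - s)) :
    ∃ Z, IsCut X Z R ∧ ∀ x, μH[d] (Z ∩ ball x s) < 2 * a := by
  choose r hr hsphere using fun x => exists_radius_hausdorffMeasure_inter_sphere_lt hd (h x)
  obtain ⟨Z₀, hZ₀, hZ₀_fin⟩ := exists_measure_lt_top μH[d] hX hR
    (fun x => ⟨hs.trans_lt (hr x).1, (hr x).2.le⟩) fun x => (hsphere x).trans_le le_top
  obtain ⟨Z, hZ, hZ_fin, hmin⟩ := exists_almost_minimal μH[d] hZ₀ hZ₀_fin ha₀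
  refine ⟨Z, hZ, fun x => ?_⟩
  calc μH[d] (Z ∩ ball x s) ≤ μH[d] (Z ∩ ball x (r x)) := by gcongr; exact (hr x).1.le
    _ ≤ μH[d] (X ∩ sphere x (r x)) + a :=
        measure_inter_ball_le hX.isClosed hZ hZ_fin hmin x (hr x).2.le
    _ < a + a := ENNReal.add_lt_add_right ha (hsphere x)
    _ = 2 * a := (two_mul a).symm

end IsCut

end Cut

section Coloring

variable {M : Type*} [MetricSpace M]

/-- A covering of `X` by small pieces, encoded by maps `c i : M → M` which move points by less
than `D` and such that near every point of `X` one of them is constant: the pieces of color `i`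
are the fibers of `c i`. -/
structure IsColoring {ι : Type*} (X : Set M) (c : ι → M → M) (D : ℝ) : Prop where
  dist_lt : ∀ i x, dist x (c i x) < D
  exists_locally_const : ∀ x ∈ X, ∃ i, ∀ᶠ x' in 𝓝 x, c i x' = c i x

-- If `x` is within the radius of two points of `Y`, the one with the larger radius sees the other.
lemma exists_extension_of_locally_const {β : Type*} {Y : Set M} {c : M → β}
    (hc : ∀ y ∈ Y, ∀ᶠ y' in 𝓝[Y] y, c y' = c y) (f : M → β) {ε : ℝ} (hε : 0 < ε) :
    ∃ g : M → β, (∀ y ∈ Y, ∀ᶠ x in 𝓝 y, g x = c y) ∧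
      ∀ x, g x = f x ∨ ∃ y ∈ Y, dist x y < ε ∧ g x = c y := by
  classical
  have hrad : ∀ y ∈ Y, ∃ e > 0, e ≤ ε ∧ ∀ y' ∈ Y, dist y' y < 2 * e → c y' = c y := fun y hy => by
    obtain ⟨e, he, hce⟩ := Metric.eventually_nhds_iff.1 (eventually_nhdsWithin_iff.1 (hc y hy))
    refine ⟨min (e / 2) ε, by positivity, min_le_right _ _, fun y' hy' hd => hce ?_ hy'⟩
    linarith [min_le_left (e / 2) ε]
  choose! e he heε hce using hrad
  have hagree : ∀ x, ∀ y ∈ Y, ∀ y' ∈ Y, dist x y < e y → dist x y' < e y' → c y = c y' := by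
    intro x y hy y' hy' hxy hxy'
    have htri : dist y y' < e y + e y' := (dist_triangle_left y y' x).trans_lt (add_lt_add hxy hxy')
    rcases le_total (e y) (e y') with hle | hle
    · exact hce y' hy' y hy (by linarith)
    · exact (hce y hy y' hy' (by rw [dist_comm]; linarith)).symm
  refine ⟨fun x => if hx : ∃ y ∈ Y, dist x y < e y then c hx.choose else f x,
    fun y hy => ?_, fun x => ?_⟩
  · filter_upwards [ball_mem_nhds y (he y hy)] with x hxy
    have hx : ∃ y ∈ Y, dist x y < e y := ⟨y, hy, hxy⟩
    rw [dif_pos hx]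
    exact hagree x _ hx.choose_spec.1 y hy hx.choose_spec.2 hxy
  · by_cases hx : ∃ y ∈ Y, dist x y < e y
    · exact Or.inr ⟨hx.choose, hx.choose_spec.1,
        hx.choose_spec.2.trans_le (heε _ hx.choose_spec.1), dif_pos hx⟩
    · exact Or.inl (dif_neg hx)

lemma IsCut.exists_isColoring_succ {X Z : Set M} {R D : ℝ} {k : ℕ} {c : Fin k → M → M}
    (hZ : IsCut X Z R) (hc : IsColoring Z c D) (hR : 0 < R) (hD : D ≤ 2 * R) :
    ∃ c' : Fin (k + 1) → M → M, IsColoring X c' (2 * R) := by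
  obtain ⟨center, hdist, hloc⟩ := hZ.exists_center
  obtain ⟨g, hg, hgf⟩ := exists_extension_of_locally_const (Y := X \ Z)
    (fun y hy => nhdsWithin_mono y sdiff_subset (hloc y hy)) id hR
  refine ⟨Fin.cons g c, fun i x => ?_, fun x hx => ?_⟩
  · cases i using Fin.cases with
    | zero =>
      rw [Fin.cons_zero]
      rcases hgf x with hx | ⟨y, hy, hxy, hx⟩
      · rw [hx, id, dist_self]; positivity
      · rw [hx]; linarith [dist_triangle x y (center y), hdist y hy.1]
    | succ j => exact (hc.dist_lt j x).trans_le hD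
  · by_cases hxZ : x ∈ Z
    · obtain ⟨i, hi⟩ := hc.exists_locally_const x hxZ
      exact ⟨i.succ, hi⟩
    · have hgx := hg x ⟨hx, hxZ⟩
      exact ⟨0, hgx.mono fun x' hx' => hx'.trans hgx.self_of_nhds.symm⟩

/-- If all balls of radius `R` have `k`-dimensional Hausdorff measure less than
`R ^ k / coloringConst k`, then `k` colors suffice for pieces of size comparable to `R`. Passing
from `k` to `k + 1` costs `2 ^ (k + 1)` for halving the radius and `2` for choosing the cut only
almost minimal. -/
def coloringConst : ℕ → ℝ
  | 0 => 1
  | k + 1 => 2 ^ (k + 2) * coloringConst k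

lemma coloringConst_pos (k : ℕ) : 0 < coloringConst k := by
  induction k with
  | zero => exact one_pos
  | succ k ih => exact mul_pos (by positivity) ih

-- Induction on `k`: an almost minimal cut is a lower-dimensional set with balls of small measure.
theorem exists_isColoring_of_hausdorffMeasure_ball_lt [MeasurableSpace M] [BorelSpace M] (k : ℕ)
    {X : Set M} (hX : IsCompact X) {R : ℝ} (hR : 0 < R)
    (h : ∀ x, μH[(k : ℝ)] (X ∩ ball x R) < ENNReal.ofReal (R ^ k / coloringConst k)) :
    ∃ c : Fin k → M → M, IsColoring X c (2 * R) := by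
  induction k generalizing X R with
  | zero =>
    refine ⟨Fin.elim0, fun i => i.elim0, fun x hx => ((h x).not_ge ?_).elim⟩
    have hne : (X ∩ ball x R).Nonempty := ⟨x, hx, mem_ball_self hR⟩
    simpa [coloringConst] using Measure.one_le_hausdorffMeasure_zero_of_nonempty hne
  | succ k ih =>
    have hK := coloringConst_pos k
    let a := ENNReal.ofReal ((R / 2) ^ k / (2 * coloringConst k))
    have ha : a ≠ 0 := (ENNReal.ofReal_pos.2 (by positivity)).ne'
    have hscale : ENNReal.ofReal (R ^ (k + 1) / coloringConst (k + 1)) =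
        a * ENNReal.ofReal (R - R / 2) := by
      rw [← ENNReal.ofReal_mul (by positivity), coloringConst, div_pow]
      congr 1
      field_simp
      ring
    have hdouble : 2 * a = ENNReal.ofReal ((R / 2) ^ k / coloringConst k) := by
      rw [← ENNReal.ofReal_ofNat, ← ENNReal.ofReal_mul zero_le_two]
      congr 1
      field_simp
    obtain ⟨Z, hZ, hZball⟩ := IsCut.exists_hausdorffMeasure_inter_ball_le (Nat.cast_nonneg k)
      hX hR.le (half_pos hR).le ha ENNReal.ofReal_ne_top
      fun x => by simpa only [Nat.cast_succ, hscale] using h x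
    obtain ⟨c, hc⟩ := ih (hX.of_isClosed_subset hZ.isClosed hZ.subset) (half_pos hR)
      fun x => (hZball x).trans_eq hdouble
    exact hZ.exists_isColoring_succ hc hR (by linarith)

end Coloring

section PolynomialFamily

open Polynomial

lemma eval_eq_sum_eval_mul_eval_lagrangeBasis {F : Type*} [Field F] [DecidableEq F] {s : Finset F}
    {P : F[X]} (hP : P.degree < s.card) (t : F) :
    P.eval t = ∑ u ∈ s, P.eval u * (Lagrange.basis s id u).eval t := by
  conv_lhs => rw [Lagrange.eq_interpolate (Set.injOn_id _) hP]
  simp [Lagrange.interpolate_apply, eval_finsetSum]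

lemma integral_eval_eq_of_eventually {α : Type*} [MeasurableSpace α] {μ : Measure α}
    {P : α → ℝ[X]} {d : ℕ} (hdeg : ∀ x, (P x).natDegree ≤ d)
    (hint : ∀ t, Integrable (fun x => (P x).eval t) μ) {V t₀ : ℝ}
    (hV : ∀ᶠ t in 𝓝 t₀, ∫ x, (P x).eval t ∂μ = V) (t : ℝ) : ∫ x, (P x).eval t ∂μ = V := by
  obtain ⟨s, hs, hcard⟩ := (infinite_of_mem_nhds t₀ hV).exists_subset_card_eq (d + 1)
  have hne : s.Nonempty := Finset.card_pos.1 (hcard ▸ d.succ_pos)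
  have hdeg' : ∀ x, (P x).degree < s.card := fun x =>
    degree_le_natDegree.trans_lt (by exact_mod_cast (hdeg x).trans_lt (by lia))
  calc ∫ x, (P x).eval t ∂μ
      = ∫ x, ∑ u ∈ s, (P x).eval u * (Lagrange.basis s id u).eval t ∂μ := by
        simp only [← eval_eq_sum_eval_mul_eval_lagrangeBasis (hdeg' _)]
    _ = ∑ u ∈ s, V * (Lagrange.basis s id u).eval t := by
        rw [integral_finsetSum _ fun u _ => (hint u).mul_const _]
        exact Finset.sum_congr rfl fun u hu => by rw [integral_mul_const, hs hu]
    _ = V := by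
        rw [← Finset.mul_sum, ← eval_finsetSum, Lagrange.sum_basis (Set.injOn_id _) hne, eval_one,
          mul_one]

lemma exists_polynomial_eval_eq_det_one_add_smul {R V : Type*} [CommRing R] [Nontrivial R]
    [AddCommGroup V] [Module R V] [Module.Free R V] [Module.Finite R V] (A : V →ₗ[R] V) :
    ∃ P : R[X], P.natDegree ≤ Module.finrank R V ∧
      ∀ t, P.eval t = LinearMap.det (1 + t • A) := by
  classical
  let b := Module.Free.chooseBasis R V
  refine ⟨_, (natDegree_det_X_add_C_le (LinearMap.toMatrix b b A) 1).trans_eq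
    (Module.finrank_eq_card_chooseBasisIndex R V).symm, fun t => ?_⟩
  rw [← LinearMap.det_toMatrix b, ← coe_evalRingHom, RingHom.map_det]
  congr 1
  ext i j
  by_cases hij : i = j <;> simp [LinearMap.toMatrix_one, hij, add_comm, mul_comm t]

end PolynomialFamily

section Jacobian

variable {E : Type*} [NormedAddCommGroup E] [NormedSpace ℝ E]

lemma bijective_id_add_of_lipschitzWith [CompleteSpace E] {p : E → E} {c : ℝ≥0}
    (hp : LipschitzWith c p) (hc : c < 1) : Function.Bijective fun x => x + p x := by
  have happrox : ApproximatesLinearOn (fun x => x + p x)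
      (ContinuousLinearEquiv.refl ℝ E : E →L[ℝ] E) univ c := by
    refine ApproximatesLinearOn.approximatesLinearOn_iff_lipschitzOnWith.2
      (lipschitzOnWith_univ.2 ?_)
    convert hp using 1
    ext x
    simp
  have hsmall : Subsingleton E ∨
      c < ‖((ContinuousLinearEquiv.refl ℝ E).symm : E →L[ℝ] E)‖₊⁻¹ := by
    rcases subsingleton_or_nontrivial E with hE | hE
    · exact Or.inl hE
    · right
      have hnorm : ‖ContinuousLinearMap.id ℝ E‖₊ = 1 := ContinuousLinearMap.nnnorm_id
      simpa [hnorm] using hc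
  exact ⟨injOn_univ.1 (happrox.injOn hsmall), happrox.surjective hsmall⟩

lemma fderiv_add_of_periodic {F : Type*} [NormedAddCommGroup F] [NormedSpace ℝ F] {p : E → F}
    {v : E} (hp : ∀ x, p (x + v) = p x) (x : E) : fderiv ℝ p (x + v) = fderiv ℝ p x := by
  rw [← fderiv_comp_add_right, funext hp]

section FiniteDimensional

variable [FiniteDimensional ℝ E]

lemma exists_lipschitzWith_of_periodic {F : Type*} [NormedAddCommGroup F] [NormedSpace ℝ F]
    (L : Submodule ℤ E) [DiscreteTopology L] [IsZLattice ℝ L] {p : E → F} (hp : ContDiff ℝ 1 p)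
    (hper : ∀ x, ∀ v ∈ L, p (x + v) = p x) :
    ∃ K : ℝ≥0, (∀ x, ‖fderiv ℝ p x‖₊ ≤ K) ∧ LipschitzWith K p := by
  obtain ⟨K, hK⟩ := (IsZLattice.isCompact_range_of_periodic L (fderiv ℝ p)
    (hp.continuous_fderiv one_ne_zero) fun x v hv =>
      fderiv_add_of_periodic (hper · v hv) x).isBounded.exists_norm_le
  have hK' : ∀ x, ‖fderiv ℝ p x‖₊ ≤ K.toNNReal := fun x =>
    norm_toNNReal.symm.trans_le (Real.toNNReal_mono (hK _ ⟨x, rfl⟩))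
  exact ⟨K.toNNReal, hK',
    lipschitzWith_of_nnnorm_fderiv_le (hp.differentiable one_ne_zero) hK'⟩

lemma eventually_det_one_add_smul_pos (K : ℝ≥0) :
    ∀ᶠ t in 𝓝 (0 : ℝ), ∀ A : E →L[ℝ] E, ‖A‖₊ ≤ K → 0 < (1 + t • A).det := by
  have hpos : ∀ A : E →L[ℝ] E, A ∈ closedBall 0 (K : ℝ) →
      ∀ᶠ q : ℝ × (E →L[ℝ] E) in 𝓝 (0, A), 0 < (1 + q.1 • q.2).det := fun A _ => by
    have hcont : Continuous fun q : ℝ × (E →L[ℝ] E) => (1 + q.1 • q.2).det :=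
      ContinuousLinearMap.continuous_det.comp (by fun_prop)
    refine hcont.continuousAt.eventually (lt_mem_nhds ?_)
    simp [ContinuousLinearMap.det]
  have : ProperSpace (E →L[ℝ] E) := FiniteDimensional.proper ℝ _
  have hcompact := isCompact_closedBall (0 : E →L[ℝ] E) (K : ℝ)
  filter_upwards [hcompact.eventually_forall_of_forall_eventually
    (P := fun t A => 0 < (1 + t • A).det) hpos] with t ht A hA
  exact ht A (mem_closedBall_zero_iff.2 hA)

end FiniteDimensional

variable {ι : Type*} [Finite ι] (b : Module.Basis ι ℝ E) [MeasurableSpace E] [BorelSpace E]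
  (μ : Measure E) [μ.IsAddHaarMeasure]

open Submodule ZSpan

lemma addHaar_image_fundamentalDomain {F : E → E} (hF : Continuous F) (hbij : F.Bijective)
    (hequiv : ∀ x, ∀ v ∈ span ℤ (range b), F (x + v) = F x + v) :
    μ (F '' fundamentalDomain b) = μ (fundamentalDomain b) := by
  have := Module.Finite.of_basis b
  have hcomm : ∀ (v : (span ℤ (range b)).toAddSubgroup) (x : E),
      v +ᵥ F x = F (v +ᵥ x) := fun v x => by
    simpa only [AddSubgroup.vadd_def, vadd_eq_add, add_comm] using (hequiv x v v.2).symm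
  have hdomain : IsAddFundamentalDomain (span ℤ (range b)).toAddSubgroup
      (F '' fundamentalDomain b) μ := by
    refine .mk' ((fundamentalDomain_measurableSet b).image_of_continuousOn_injOn hF.continuousOn
      hbij.injective.injOn).nullMeasurableSet fun y => ?_
    obtain ⟨x, rfl⟩ := hbij.surjective y
    simp only [hcomm, hbij.injective.mem_set_image]
    exact exist_unique_vadd_mem_fundamentalDomain b x
  have : Countable (span ℤ (range b)).toAddSubgroup :=
    inferInstanceAs (Countable (span ℤ (range b)))
  exact hdomain.measure_eq (ZSpan.isAddFundamentalDomain' b μ)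

lemma setIntegral_det_fderiv_of_bijective {F : E → E} (hF : ContDiff ℝ 1 F) (hbij : F.Bijective)
    (hequiv : ∀ x, ∀ v ∈ span ℤ (range b), F (x + v) = F x + v)
    (hdet : ∀ x, 0 ≤ (fderiv ℝ F x).det) :
    ∫ x in fundamentalDomain b, (fderiv ℝ F x).det ∂μ = μ.real (fundamentalDomain b) := by
  have := Module.Finite.of_basis b
  have hmeas : AEStronglyMeasurable (fun x => (fderiv ℝ F x).det)
      (μ.restrict (fundamentalDomain b)) :=
    (ContinuousLinearMap.continuous_det.comp
      (hF.continuous_fderiv one_ne_zero)).aestronglyMeasurable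
  have hchange := lintegral_abs_det_fderiv_eq_addHaar_image μ (fundamentalDomain_measurableSet b)
    (fun x _ => (hF.differentiable one_ne_zero x).hasFDerivAt.hasFDerivWithinAt)
    hbij.injective.injOn
  simp only [abs_of_nonneg (hdet _)] at hchange
  rw [integral_eq_lintegral_of_nonneg_ae (.of_forall hdet) hmeas, hchange,
    addHaar_image_fundamentalDomain b μ hF.continuous hbij hequiv, measureReal_def]

-- For small `t` the map `x ↦ x + t • p x` is an orientation-preserving bijection.
lemma eventually_setIntegral_det_one_add_smul {p : E → E} (hp : ContDiff ℝ 1 p)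
    (hper : ∀ x, ∀ v ∈ span ℤ (range b), p (x + v) = p x) :
    ∀ᶠ t in 𝓝 (0 : ℝ), ∫ x in fundamentalDomain b, (1 + t • fderiv ℝ p x).det ∂μ =
      μ.real (fundamentalDomain b) := by
  have := Module.Finite.of_basis b
  have : CompleteSpace E := FiniteDimensional.complete ℝ E
  obtain ⟨K, hK, hlip⟩ := exists_lipschitzWith_of_periodic (span ℤ (range b)) hp hper
  have hsmall : ∀ᶠ t in 𝓝 (0 : ℝ), ‖t‖₊ * K < 1 :=
    (by fun_prop : Continuous fun t : ℝ => ‖t‖₊ * K).continuousAt.eventually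
      (gt_mem_nhds (by simp))
  filter_upwards [hsmall, eventually_det_one_add_smul_pos (E := E) K] with t ht hdet
  have hfderiv : ∀ x, fderiv ℝ (fun x => x + t • p x) x = 1 + t • fderiv ℝ p x := fun x =>
    ((hasFDerivAt_id x).add ((hp.differentiable one_ne_zero x).hasFDerivAt.const_smul t)).fderiv
  simp only [← hfderiv]
  refine setIntegral_det_fderiv_of_bijective b μ (contDiff_fun_id.add (hp.const_smul t))
    (bijective_id_add_of_lipschitzWith ((lipschitzWith_smul t).comp hlip) ht) (fun x v hv => ?_)
    fun x => ?_
  · rw [hper x v hv, add_right_comm]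
  · rw [hfderiv]
    exact (hdet _ (hK x)).le

lemma setIntegral_det_one_add_fderiv {p : E → E} (hp : ContDiff ℝ 1 p)
    (hper : ∀ x, ∀ v ∈ span ℤ (range b), p (x + v) = p x) :
    ∫ x in fundamentalDomain b, (1 + fderiv ℝ p x).det ∂μ = μ.real (fundamentalDomain b) := by
  have := Module.Finite.of_basis b
  choose P hdeg hPdet using fun x : E =>
    exists_polynomial_eval_eq_det_one_add_smul (fderiv ℝ p x : E →ₗ[ℝ] E)
  have hP : ∀ x t, (P x).eval t = (1 + t • fderiv ℝ p x).det := hPdet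
  have hint : ∀ t, IntegrableOn (fun x => (P x).eval t) (fundamentalDomain b) μ := fun t => by
    have hcont : Continuous fun x => (1 + t • fderiv ℝ p x).det :=
      ContinuousLinearMap.continuous_det.comp
        (continuous_const.add ((hp.continuous_fderiv one_ne_zero).const_smul t))
    simp only [hP]
    have : ProperSpace E := FiniteDimensional.proper ℝ E
    exact (hcont.continuousOn.integrableOn_compact
      (fundamentalDomain_isBounded b).isCompact_closure).mono_set subset_closure
  have hnear := eventually_setIntegral_det_one_add_smul b μ hp hper
  simpa [hP] using integral_eval_eq_of_eventually (μ := μ.restrict (fundamentalDomain b)) hdeg hint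
    (by simpa only [hP] using hnear) 1

theorem setIntegral_det_fderiv_of_equivariant {F : E → E} (hF : ContDiff ℝ 1 F)
    (hequiv : ∀ x, ∀ v ∈ span ℤ (range b), F (x + v) = F x + v) :
    ∫ x in fundamentalDomain b, (fderiv ℝ F x).det ∂μ = μ.real (fundamentalDomain b) := by
  have hfderiv : ∀ x, 1 + fderiv ℝ (fun x => F x - x) x = fderiv ℝ F x := fun x => by
    rw [fderiv_fun_sub (hF.differentiable one_ne_zero x) differentiableAt_fun_id, fderiv_fun_id]
    exact add_sub_cancel _ _
  simp only [← hfderiv]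
  refine setIntegral_det_one_add_fderiv b μ (hF.sub contDiff_fun_id) fun x v hv => ?_
  rw [hequiv x v hv, add_sub_add_right_eq_sub]

end Jacobian

section Obstruction

open Submodule ZSpan Bornology
open ContinuousLinearMap (lsmul)
open scoped Convolution

variable {E F : Type*} [NormedAddCommGroup E] [NormedSpace ℝ E] [NormedAddCommGroup F]
  {ι : Type*}

lemma exists_basis_span_le_and_sum_norm_lt [Fintype ι] (b : Module.Basis ι ℝ E) {ε : ℝ}
    (hε : 0 < ε) : ∃ b' : Module.Basis ι ℝ E,
      span ℤ (range b) ≤ span ℤ (range b') ∧ ∑ i, ‖b' i‖ < ε := by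
  obtain ⟨N, hN⟩ := exists_nat_gt ((∑ i, ‖b i‖) / ε)
  have hN0 : (0 : ℝ) < N := lt_of_le_of_lt (by positivity) hN
  let b' : Module.Basis ι ℝ E := b.isUnitSMul fun _ => (inv_ne_zero hN0.ne').isUnit
  have hb' : ∀ i, b' i = (N : ℝ)⁻¹ • b i := b.isUnitSMul_apply _
  refine ⟨b', span_le.2 ?_, ?_⟩
  · rintro _ ⟨i, rfl⟩
    have hi : b i = N • b' i := by
      rw [hb', ← Nat.cast_smul_eq_nsmul ℝ, smul_inv_smul₀ hN0.ne']
    rw [hi]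
    exact nsmul_mem (subset_span (mem_range_self i)) N
  · simp only [hb', norm_smul, ← Finset.mul_sum, norm_inv, RCLike.norm_natCast]
    rwa [inv_mul_lt_iff₀ hN0, ← div_lt_iff₀ hε]

lemma det_eq_zero_of_comp_eq_zero [FiniteDimensional ℝ E] {A : E →L[ℝ] E} {ℓ : E →L[ℝ] ℝ}
    (hℓ : ℓ ≠ 0) (h : ℓ ∘L A = 0) : A.det = 0 := by
  by_contra hdet
  refine hℓ (ContinuousLinearMap.ext fun y => ?_)
  obtain ⟨x, rfl⟩ := (LinearMap.equivOfDetNeZero (A : E →ₗ[ℝ] E) hdet).surjective y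
  exact DFunLike.congr_fun h x

section Mollification

variable [FiniteDimensional ℝ E] [NormedSpace ℝ F] [MeasurableSpace E] [BorelSpace E]
  {μ : Measure E} [μ.IsAddHaarMeasure] (φ : ContDiffBump (0 : E)) {g : E → F}

lemma integrable_normed_smul_comp_sub (hg : LocallyIntegrable g μ) (x : E) :
    Integrable (fun t => φ.normed μ t • g (x - t)) μ :=
  φ.hasCompactSupport_normed.convolutionExists_left (lsmul ℝ ℝ) φ.continuous_normed hg x

variable [CompleteSpace F]

lemma normed_convolution_add (hg : LocallyIntegrable g μ) {v : E} {w : F}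
    (hv : ∀ x, g (x + v) = g x + w) (x : E) :
    (φ.normed μ ⋆[lsmul ℝ ℝ, μ] g) (x + v) = (φ.normed μ ⋆[lsmul ℝ ℝ, μ] g) x + w := by
  have hshift : ∀ t, φ.normed μ t • g (x + v - t) =
      φ.normed μ t • g (x - t) + φ.normed μ t • w := fun t => by
    rw [add_sub_right_comm, hv, smul_add]
  simp only [convolution_def, ContinuousLinearMap.lsmul_apply, hshift]
  rw [integral_add (integrable_normed_smul_comp_sub φ hg x) (φ.integrable_normed.smul_const w),
    integral_smul_const, φ.integral_normed, one_smul]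

lemma map_normed_convolution_eq_of_forall_mem_ball (hg : LocallyIntegrable g μ) {ℓ : F →L[ℝ] ℝ}
    {y : E} (hℓ : ∀ z ∈ ball y φ.rOut, ℓ (g z) = ℓ (g y)) :
    ℓ ((φ.normed μ ⋆[lsmul ℝ ℝ, μ] g) y) = ℓ (g y) := by
  have hcomm : ℓ ((φ.normed μ ⋆[lsmul ℝ ℝ, μ] g) y) =
      (φ.normed μ ⋆[lsmul ℝ ℝ, μ] fun z => ℓ (g z)) y := by
    simpa [convolution_def] using
      (ℓ.integral_comp_comm (integrable_normed_smul_comp_sub φ hg y)).symm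
  rw [hcomm, φ.normed_convolution_eq_right hℓ]

end Mollification

lemma measurable_zspan_floor [Fintype ι] (b : Module.Basis ι ℝ E) [MeasurableSpace E]
    [BorelSpace E] : Measurable (floor b) := by
  refine measurable_to_countable' fun v => ?_
  have hfiber : floor b ⁻¹' {v} = (fun x => -(v : E) + x) ⁻¹' fundamentalDomain b := by
    ext x
    have := vadd_mem_fundamentalDomain b (-v) x
    rw [neg_inj, eq_comm] at this
    exact this.symm
  rw [hfiber]
  exact measurable_const_add _ (fundamentalDomain_measurableSet b)

lemma finite_image_zspan_floor [Fintype ι] (b : Module.Basis ι ℝ E) {s : Set E} (hs : IsBounded s) :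
    (floor b '' s).Finite := by
  have := Module.Finite.of_basis b
  have : ProperSpace E := FiniteDimensional.proper ℝ E
  obtain ⟨C, hC⟩ := hs.exists_norm_le
  refine .of_finite_image ((setFinite_inter b
    (isBounded_closedBall (x := 0) (r := C + ∑ i, ‖b i‖))).subset ?_) Subtype.val_injective.injOn
  rintro _ ⟨_, ⟨x, hx, rfl⟩, rfl⟩
  refine ⟨mem_closedBall_zero_iff.2 ?_, (floor b x).2⟩
  calc ‖(floor b x : E)‖ = ‖x - fract b x‖ := by rw [fract_apply, sub_sub_cancel]
    _ ≤ ‖x‖ + ‖fract b x‖ := norm_sub_le _ _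
    _ ≤ C + ∑ i, ‖b i‖ := add_le_add (hC x hx) (norm_fract_le b x)

lemma locallyIntegrable_comp_zspan_floor [Fintype ι] (b : Module.Basis ι ℝ E) [MeasurableSpace E]
    [BorelSpace E] {μ : Measure E} [IsLocallyFiniteMeasure μ] (g : span ℤ (range b) → F) :
    LocallyIntegrable (fun x => g (floor b x)) μ := by
  have := Module.Finite.of_basis b
  have : ProperSpace E := FiniteDimensional.proper ℝ E
  have hmeas : StronglyMeasurable fun x => g (floor b x) :=
    (StronglyMeasurable.of_discrete (f := g)).comp_measurable (measurable_zspan_floor b)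
  refine locallyIntegrable_iff.2 fun K hK => ?_
  obtain ⟨B, hB⟩ := ((finite_image_zspan_floor b hK.isBounded).image fun v => ‖g v‖).bddAbove
  exact Measure.integrableOn_of_bounded hK.measure_lt_top.ne hmeas.aestronglyMeasurable
    (ae_restrict_of_forall_mem hK.measurableSet fun x hx =>
      hB (mem_image_of_mem _ (mem_image_of_mem _ hx)))

theorem exists_forall_dual_eq_zero_of_locallyIntegrable [Finite ι] (b : Module.Basis ι ℝ E)
    [MeasurableSpace E] [BorelSpace E] (μ : Measure E) [μ.IsAddHaarMeasure] {g : E → E}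
    (hg : LocallyIntegrable g μ) (hequiv : ∀ x, ∀ v ∈ span ℤ (range b), g (x + v) = g x + v)
    {δ : ℝ} (hδ : 0 < δ) :
    ∃ x, ∀ ℓ : E →L[ℝ] ℝ, (∀ x' ∈ ball x δ, ℓ (g x') = ℓ (g x)) → ℓ = 0 := by
  have := Module.Finite.of_basis b
  by_contra! hconst
  let φ : ContDiffBump (0 : E) := ⟨δ / 4, δ / 2, by positivity, by linarith⟩
  set G := φ.normed μ ⋆[lsmul ℝ ℝ, μ] g with hG
  have hGdiff : ContDiff ℝ 1 G :=
    φ.hasCompactSupport_normed.contDiff_convolution_left _ φ.contDiff_normed hg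
  have hdet : ∀ x, (fderiv ℝ G x).det = 0 := fun x => by
    obtain ⟨ℓ, hℓ, hℓ0⟩ := hconst x
    have hloc : (fun y => ℓ (G y)) =ᶠ[𝓝 x] fun _ => ℓ (g x) := by
      filter_upwards [ball_mem_nhds x (half_pos hδ)] with y hy
      have hball : ∀ z ∈ ball y (δ / 2), ℓ (g z) = ℓ (g x) := fun z hz =>
        hℓ z (ball_subset_ball' (by linarith [mem_ball.1 hy]) hz)
      have hy' := hball y (mem_ball_self (half_pos hδ))
      rw [hG, map_normed_convolution_eq_of_forall_mem_ball φ hg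
        fun z hz => (hball z hz).trans hy'.symm, hy']
    refine det_eq_zero_of_comp_eq_zero hℓ0 ?_
    exact (ℓ.hasFDerivAt.comp x (hGdiff.differentiable one_ne_zero x).hasFDerivAt).unique
      ((hasFDerivAt_const _ x).congr_of_eventuallyEq hloc)
  have hvol := setIntegral_det_fderiv_of_equivariant b μ hGdiff fun x v hv =>
    normed_convolution_add φ hg (fun x => hequiv x v hv) x
  have : ProperSpace E := FiniteDimensional.proper ℝ E
  simp only [hdet, integral_zero] at hvol
  exact (measureReal_ne_zero_iff (fundamentalDomain_isBounded b).measure_lt_top.ne).2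
    (measure_fundamentalDomain_ne_zero b) hvol.symm

-- Replacing `g` by its composition with rounding to a fine lattice makes it locally integrable.
theorem exists_forall_dual_eq_zero_of_const_on_ball [Finite ι] (b : Module.Basis ι ℝ E) {g : E → E}
    (hequiv : ∀ x, ∀ v ∈ span ℤ (range b), g (x + v) = g x + v) {δ : ℝ} (hδ : 0 < δ) :
    ∃ x, ∀ ℓ : E →L[ℝ] ℝ, (∀ x' ∈ ball x δ, ℓ (g x') = ℓ (g x)) → ℓ = 0 := by
  have := Module.Finite.of_basis b
  borelize E
  have := Fintype.ofFinite ι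
  obtain ⟨b', hb', hsum⟩ := exists_basis_span_le_and_sum_norm_lt b (half_pos hδ)
  have hround : ∀ x, dist (floor b' x : E) x < δ / 2 := fun x => by
    rw [dist_comm, dist_eq_norm, ← fract_apply]
    exact (norm_fract_le b' x).trans_lt hsum
  have hequiv' : ∀ x, ∀ v ∈ span ℤ (range b),
      g (floor b' (x + v)) = g (floor b' x) + v := fun x v hv => by
    have hfract := fract_add_ZSpan b' x (hb' hv)
    rw [fract_apply, fract_apply, sub_eq_sub_iff_add_eq_add] at hfract
    rw [← hequiv _ v hv]
    congr 1
    grind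
  obtain ⟨x, hx⟩ := exists_forall_dual_eq_zero_of_locallyIntegrable b Measure.addHaar
    (locallyIntegrable_comp_zspan_floor b' fun v => g v) hequiv' (half_pos hδ)
  have hball : ∀ x' ∈ ball x (δ / 2), (floor b' x' : E) ∈ ball x δ := fun x' hx' => by
    rw [mem_ball] at hx' ⊢
    linarith [hround x', dist_triangle (floor b' x' : E) x' x]
  exact ⟨x, fun ℓ hℓ => hx ℓ fun x' hx' => (hℓ _ (hball x' hx')).trans
    (hℓ _ (hball x (mem_ball_self (half_pos hδ)))).symm⟩

-- Only the compact closure of a fundamental domain matters, so Lebesgue numbers exist.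
theorem exists_forall_dual_eq_zero_of_eventually_const [Finite ι] (b : Module.Basis ι ℝ E)
    {g : E → E} (hequiv : ∀ x, ∀ v ∈ span ℤ (range b), g (x + v) = g x + v) :
    ∃ x, ∀ ℓ : E →L[ℝ] ℝ, (∀ᶠ x' in 𝓝 x, ℓ (g x') = ℓ (g x)) → ℓ = 0 := by
  have := Fintype.ofFinite ι
  have := Module.Finite.of_basis b
  have : ProperSpace E := FiniteDimensional.proper ℝ E
  by_contra! hconst
  choose ℓ hℓ hℓ0 using hconst
  obtain ⟨δ, hδ, hball⟩ := lebesgue_number_lemma_of_metric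
    (fundamentalDomain_isBounded b).isCompact_closure (fun y => isOpen_interior)
    fun y _ => mem_iUnion.2 ⟨y, mem_interior_iff_mem_nhds.2 (hℓ y)⟩
  obtain ⟨x, hx⟩ := exists_forall_dual_eq_zero_of_const_on_ball b hequiv hδ
  obtain ⟨y, hy⟩ := hball (fract b x) (subset_closure (fract_mem_fundamentalDomain b x))
  have hshift : ∀ x', g (x' - floor b x) = g x' - floor b x := fun x' => by
    rw [eq_sub_iff_add_eq, ← hequiv _ _ (floor b x).2, sub_add_cancel]
  have hfract : ∀ x' ∈ ball x δ, ℓ y (g x' - floor b x) = ℓ y (g y) := fun x' hx' => by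
    rw [← hshift]
    exact interior_subset (s := {z | ℓ y (g z) = ℓ y (g y)})
      (hy (by rwa [fract_apply, mem_ball, dist_sub_right]))
  refine hℓ0 y (hx (ℓ y) fun x' hx' => ?_)
  have := (hfract x' hx').trans (hfract x (mem_ball_self hδ)).symm
  rwa [map_sub, map_sub, sub_left_inj] at this

end Obstruction

section PathLength

variable {X : Type} [PseudoEMetricSpace X] {x y z : X}

lemma edist_le_pathLength (γ : Path x y) (t : unitInterval) : edist x (γ t) ≤ pathLength γ := by
  simpa [pathLength] using eVariationOn.edist_le (fun t => γ t) (mem_univ 0) (mem_univ t)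

lemma pathLength_symm_le (γ : Path x y) : pathLength γ.symm ≤ pathLength γ :=
  eVariationOn.comp_le_of_antitoneOn _ unitInterval.symm
    (unitInterval.strictAnti_symm.antitone.antitoneOn _) (mapsTo_univ _ _)

lemma eVariationOn_extend_comp_le (γ : Path x y) {f : unitInterval → ℝ} (hf : Monotone f)
    (s : Set unitInterval) : eVariationOn (γ.extend ∘ f) s ≤ pathLength γ :=
  eVariationOn.comp_le_of_monotoneOn (fun t => γ t) (fun t => projIcc 0 1 zero_le_one (f t))
    ((monotone_projIcc _).comp hf |>.monotoneOn _) (mapsTo_univ _ _)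

lemma pathLength_trans_le (γ : Path x y) (γ' : Path y z) :
    pathLength (γ.trans γ') ≤ pathLength γ + pathLength γ' := by
  let half : unitInterval := ⟨1 / 2, by norm_num, by norm_num⟩
  have hfirst : EqOn (fun t => (γ.trans γ') t) (γ.extend ∘ fun t => 2 * t) (Iic half) :=
    fun t ht => by simpa using Path.extend_trans_of_le_half γ γ' (t := t) ht
  have hsecond : EqOn (fun t => (γ.trans γ') t) (γ'.extend ∘ fun t => 2 * t - 1) (Ici half) :=
    fun t ht => by simpa using Path.extend_trans_of_half_le γ γ' (t := t) ht
  rw [pathLength, ← Iic_union_Ici (a := half),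
    eVariationOn.union _ isGreatest_Iic isLeast_Ici, eVariationOn.eq_of_eqOn hfirst,
    eVariationOn.eq_of_eqOn hsecond]
  exact add_le_add
    (eVariationOn_extend_comp_le γ (fun a b (hab : (a : ℝ) ≤ b) => by simpa using hab) _)
    (eVariationOn_extend_comp_le γ' (fun a b (hab : (a : ℝ) ≤ b) => by simpa using hab) _)

lemma homotopic_refl_of_pathLength_lt_systole {γ : Path x x} (hγ : pathLength γ < systole X) :
    γ.Homotopic (Path.refl x) := by
  by_contra hcon
  exact hγ.not_ge (iInf_le_of_le x (iInf_le_of_le γ (iInf_le _ hcon)))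

end PathLength

section JoinedWithin

variable {E M : Type} [TopologicalSpace E] [PseudoEMetricSpace M] {q : C(E, M)} {L L' : ℝ≥0∞}
  {x y z : E}

/-- `x` and `y` can be joined by a path whose image under `q` has length less than `L`. When `q` is
a covering, this compares points of `E` by the pulled back length structure without putting a
metric on `E`. -/
def JoinedWithin (q : C(E, M)) (L : ℝ≥0∞) (x y : E) : Prop :=
  ∃ γ : Path x y, pathLength (γ.map q.continuous) < L

lemma JoinedWithin.symm (h : JoinedWithin q L x y) : JoinedWithin q L y x := by
  obtain ⟨γ, hγ⟩ := h
  exact ⟨γ.symm, by simpa only [← Path.map_symm] using (pathLength_symm_le _).trans_lt hγ⟩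

lemma JoinedWithin.trans (h : JoinedWithin q L x y) (h' : JoinedWithin q L' y z) :
    JoinedWithin q (L + L') x z := by
  obtain ⟨γ, hγ⟩ := h
  obtain ⟨γ', hγ'⟩ := h'
  refine ⟨γ.trans γ', ?_⟩
  rw [Path.map_trans]
  exact (pathLength_trans_le _ _).trans_lt (ENNReal.add_lt_add hγ hγ')

lemma JoinedWithin.map {f : E → E} (hf : Continuous f) (hqf : ∀ x, q (f x) = q x)
    (h : JoinedWithin q L x y) : JoinedWithin q L (f x) (f y) := by
  obtain ⟨γ, hγ⟩ := h
  refine ⟨γ.map hf, ?_⟩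
  simpa [pathLength, hqf] using hγ

lemma exists_joinedWithin_of_edist_lt (hq : IsCoveringMap q) (hM : IsLengthMetric M) {p : M}
    (hp : edist (q x) p < L) : ∃ y, q y = p ∧ JoinedWithin q L x y := by
  rw [hM, iInf_lt_iff] at hp
  obtain ⟨γ, hγ⟩ := hp
  obtain ⟨Γ, hΓ, hΓ0⟩ := hq.exists_path_lifts γ x γ.source
  have hlift : ∀ t, q (Γ t) = γ t := congrFun hΓ
  refine ⟨Γ 1, (hlift 1).trans γ.target, ⟨Γ, hΓ0, rfl⟩, ?_⟩
  simpa [pathLength, hlift] using hγ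

-- The image of a short path between points of one fiber is a contractible loop, and its lift is
-- therefore closed.
lemma JoinedWithin.eq_of_map_eq (hq : IsCoveringMap q) (h : JoinedWithin q L x y)
    (hL : L ≤ systole M) (hxy : q x = q y) : x = y := by
  obtain ⟨γ, hγ⟩ := h
  let loop : Path (q x) (q x) := (γ.map q.continuous).cast rfl hxy
  have hloop : loop.Homotopic (Path.refl (q x)) :=
    homotopic_refl_of_pathLength_lt_systole (hγ.trans_le hL)
  have hlift : γ.toContinuousMap = hq.liftPath loop.toContinuousMap x loop.source :=
    (hq.eq_liftPath_iff' _).2 ⟨rfl, γ.source⟩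
  calc x = hq.liftPath (.const _ (q x)) x rfl 1 :=
        (DFunLike.congr_fun (hq.liftPath_const (e := x) rfl) 1).symm
    _ = hq.liftPath loop.toContinuousMap x loop.source 1 :=
        (hq.liftPath_apply_one_eq_of_homotopicRel hloop x loop.source rfl).symm
    _ = y := by rw [← hlift]; exact γ.target

lemma eventually_joinedWithin (hq : IsLocalHomeomorph q) (hM : IsLengthMetric M) (hL : L ≠ 0)
    (x : E) : ∀ᶠ x' in 𝓝 x, JoinedWithin q L x x' := by
  obtain ⟨e, hxe, hqe⟩ := hq x
  obtain ⟨ρ, hρ, hball⟩ := EMetric.mem_nhds_iff.1 (e.open_target.mem_nhds (e.map_source hxe))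
  have hclose : ∀ᶠ x' in 𝓝 x, q x' ∈ eball (q x) (min ρ L) :=
    q.continuous.continuousAt.eventually (eball_mem_nhds _ (lt_min hρ (pos_iff_ne_zero.2 hL)))
  filter_upwards [hclose, e.open_source.mem_nhds hxe] with x' hx' hx'e
  rw [mem_eball, edist_comm, hM, iInf_lt_iff] at hx'
  obtain ⟨γ, hγ⟩ := hx'
  have htarget : ∀ t, γ t ∈ e.target := fun t => hball <| by
    rw [mem_eball, edist_comm, ← hqe]
    exact (edist_le_pathLength γ t).trans_lt (hγ.trans_le (min_le_left _ _))
  let Γ : Path x x' :=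
    { toFun := fun t => e.symm (γ t)
      continuous_toFun := e.continuousOn_symm.comp_continuous γ.continuous htarget
      source' := by rw [γ.source, hqe, e.left_inv hxe]
      target' := by rw [γ.target, hqe, e.left_inv hx'e] }
  have hΓ : ∀ t, q (Γ t) = γ t := fun t => (congrFun hqe _).trans (e.right_inv (htarget t))
  refine ⟨Γ, ?_⟩
  simpa [pathLength, hΓ] using hγ.trans_le (min_le_right _ _)

end JoinedWithin

section Systole

variable {E M : Type}

-- The lift moving points by less than `L` is unique because `2 * L` is below the systole, so it
-- commutes with deck translations and inherits local constancy.
lemma exists_equivariant_lift [AddCommGroup E] [TopologicalSpace E] [ContinuousAdd E]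
    [PseudoEMetricSpace M] {q : C(E, M)} {Λ : AddSubgroup E} (hq : IsAddQuotientCoveringMap q Λ)
    (hM : IsLengthMetric M) {f : M → M} {L : ℝ≥0∞} (hf : ∀ p, edist p (f p) < L)
    (hL : 2 * L < systole M) :
    ∃ F : E → E, (∀ x, ∀ v ∈ Λ, F (x + v) = F x + v) ∧
      ∀ x, (∀ᶠ p in 𝓝 (q x), f p = f (q x)) → ∀ᶠ x' in 𝓝 x, F x' = F x := by
  have hcov : IsCoveringMap q := hq.isCoveringMap
  choose F hF hjoined using fun x => exists_joinedWithin_of_edist_lt hcov hM (hf (q x))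
  refine ⟨F, fun x v hv => ?_, fun x hx => ?_⟩
  · have hperiodic : ∀ y, q (y + v) = q y := fun y => by
      rw [add_comm]
      exact hq.map_vadd ⟨v, hv⟩
    have htranslate := (hjoined x).map (continuous_add_const v) hperiodic
    refine ((hjoined (x + v)).symm.trans htranslate).eq_of_map_eq hcov ?_ ?_
    · rw [← two_mul]
      exact hL.le
    · rw [hF, hperiodic, hperiodic, hF]
  · obtain ⟨η, hη, hsum⟩ : ∃ η ≠ 0, 2 * L + η = systole M :=
      ⟨_, (tsub_pos_of_lt hL).ne', add_tsub_cancel_of_le hL.le⟩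
    filter_upwards [q.continuous.continuousAt.eventually hx,
      eventually_joinedWithin hcov.isLocalHomeomorph hM hη x] with x' hx' hxx'
    refine (((hjoined x').symm.trans hxx'.symm).trans (hjoined x)).eq_of_map_eq hcov ?_ ?_
    · rw [add_right_comm, ← two_mul]
      exact hsum.le
    · rw [hF, hF, hx']

open Submodule

variable [NormedAddCommGroup E] [NormedSpace ℝ E] {ι : Type*}

-- The `i`-th coordinates of the lifts of the `c i` assemble to an equivariant map `g` with a
-- locally constant coordinate near every point.
theorem systole_le_of_isColoring [Finite ι] [MetricSpace M]
    (b : Module.Basis ι ℝ E) {q : C(E, M)}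
    (hq : IsAddQuotientCoveringMap q (span ℤ (range b)).toAddSubgroup) (hM : IsLengthMetric M)
    {c : ι → M → M} {D : ℝ} (hc : IsColoring univ c D) :
    systole M ≤ 2 * ENNReal.ofReal D := by
  have := Fintype.ofFinite ι
  have := Module.Finite.of_basis b
  by_contra! hlt
  have hedist : ∀ i p, edist p (c i p) < ENNReal.ofReal D := fun i p => by
    rw [edist_dist]
    exact (ENNReal.ofReal_lt_ofReal_iff_of_nonneg dist_nonneg).2 (hc.dist_lt i p)
  choose F hequiv hconst using fun i => exists_equivariant_lift hq hM (hedist i) hlt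
  let g : E → E := fun x => b.equivFun.symm fun i => b.repr (F i x) i
  have hg : ∀ i x, b.repr (g x) i = b.repr (F i x) i := fun i x =>
    congrFun (b.equivFun.apply_symm_apply _) i
  have hgequiv : ∀ x, ∀ v ∈ span ℤ (range b), g (x + v) = g x + v := fun x v hv =>
    b.repr.injective (Finsupp.ext fun i => by simp [hg, hequiv i x v hv])
  obtain ⟨x, hx⟩ := exists_forall_dual_eq_zero_of_eventually_const b hgequiv
  obtain ⟨i, hi⟩ := hc.exists_locally_const (q x) (mem_univ _)
  have hzero : (b.coord i).toContinuousLinearMap = 0 :=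
    hx _ ((hconst i x hi).mono fun x' hx' => by simp [hg, hx'])
  simpa using DFunLike.congr_fun hzero (b i)

end Systole

section Torus

open Submodule

variable {n : ℕ} {M : Type}

/-- The universal covering `ℝⁿ → M` of a space homeomorphic to the torus, with deck group the
translations by integer vectors. -/
def torusCover [TopologicalSpace M] (h : M ≃ₜ Torus n) : C(Fin n → ℝ, M) where
  toFun x := h.symm fun i => x i
  continuous_toFun := h.symm.continuous.comp <|
    continuous_pi fun i => (AddCircle.continuous_mk' 1).comp (continuous_apply i)

lemma mem_span_int_range_basisFun_iff {x : Fin n → ℝ} :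
    x ∈ span ℤ (range (Pi.basisFun ℝ (Fin n))) ↔ ∀ i, (x i : AddCircle (1 : ℝ)) = 0 := by
  simp only [Module.Basis.mem_span_iff_repr_mem, AddCircle.coe_eq_zero_iff, zsmul_one,
    Pi.basisFun_repr, algebraMap_int_eq, eq_intCast, mem_range]

lemma isAddQuotientCoveringMap_torusCover [TopologicalSpace M] (h : M ≃ₜ Torus n) :
    IsAddQuotientCoveringMap (torusCover h)
      (span ℤ (range (Pi.basisFun ℝ (Fin n)))).toAddSubgroup := by
  have hquot : IsOpenQuotientMap (Pi.map fun _ => (↑) : (Fin n → ℝ) → Torus n) :=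
    .piMap fun _ => QuotientAddGroup.isOpenQuotientMap_mk
  refine (hquot.isQuotientMap.isAddQuotientCoveringMap_of_addSubgroup _ ⟨?_⟩ ?_).homeomorph_comp
    h.symm
  · exact inferInstanceAs (DiscreteTopology (span ℤ (range (Pi.basisFun ℝ (Fin n)))))
  · intro x y
    rw [mem_toAddSubgroup, mem_span_int_range_basisFun_iff, funext_iff]
    exact forall_congr' fun i => by
      rw [← sub_eq_add_neg, Pi.sub_apply, AddCircle.coe_sub, sub_eq_zero, eq_comm]
      rfl

variable [MetricSpace M] [MeasurableSpace M] [BorelSpace M]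

lemma systole_le_of_hausdorffMeasure_ball_lt (h : M ≃ₜ Torus n) (hM : IsLengthMetric M) {R : ℝ}
    (hR : 0 < R)
    (hball : ∀ x : M, μH[(n : ℝ)] (ball x R) < ENNReal.ofReal (R ^ n / coloringConst n)) :
    systole M ≤ ENNReal.ofReal (4 * R) := by
  have : CompactSpace M := h.symm.compactSpace
  obtain ⟨c, hc⟩ := exists_isColoring_of_hausdorffMeasure_ball_lt n isCompact_univ hR
    (by simpa only [univ_inter] using hball)
  calc systole M ≤ 2 * ENNReal.ofReal (2 * R) :=
        systole_le_of_isColoring _ (isAddQuotientCoveringMap_torusCover h) hM hc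
    _ = ENNReal.ofReal (4 * R) := by
        rw [← ENNReal.ofReal_ofNat 2, ← ENNReal.ofReal_mul zero_le_two]
        ring_nf

theorem systole_le_mul_hausdorffMeasure_rpow (hn : 0 < n) (h : M ≃ₜ Torus n)
    (hM : IsLengthMetric M) :
    systole M ≤
      4 * (ENNReal.ofReal (coloringConst n) * μH[(n : ℝ)] (univ : Set M)) ^ (n : ℝ)⁻¹ := by
  by_contra! hlt
  rw [mul_comm, ← ENNReal.lt_div_iff_mul_lt (by simp) (by simp)] at hlt
  obtain ⟨R, hrR, hRsys⟩ := ENNReal.lt_iff_exists_nnreal_btwn.1 hlt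
  have hR : (0 : ℝ) < R := NNReal.coe_pos.2 (ENNReal.coe_pos.1 (pos_of_gt hrR))
  have hvol : μH[(n : ℝ)] (univ : Set M) < ENNReal.ofReal (R ^ n / coloringConst n) := by
    have hK := coloringConst_pos n
    rw [ENNReal.rpow_inv_lt_iff (Nat.cast_pos.2 hn), ENNReal.rpow_natCast] at hrR
    rw [ENNReal.ofReal_div_of_pos hK, ENNReal.lt_div_iff_mul_lt (by simp [hK]) (by simp), mul_comm]
    simpa [ENNReal.ofReal_pow] using hrR
  have hsys : systole M ≤ R * 4 := by
    simpa [ENNReal.ofReal_mul, mul_comm] using systole_le_of_hausdorffMeasure_ball_lt h hM hR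
      fun x => (measure_mono (subset_univ _)).trans_lt hvol
  exact (ENNReal.mul_lt_of_lt_div hRsys).not_ge hsys

lemma unitBallVolume_ne_zero (d : ℕ) : unitBallVolume d ≠ 0 := by
  have := Real.Gamma_pos_of_pos (show (0 : ℝ) < (d : ℝ) / 2 + 1 by positivity)
  exact (ENNReal.ofReal_pos.2 (by positivity)).ne'

end Torus

/-- **Theorem 1 (Gromov; systolic inequality for the torus).**
For every `n` there is a constant `C(n)` such that every Riemannian metric `g` on the
`n`-dimensional torus satisfies `Sys(Tⁿ, g) ≤ C(n) · Vol(Tⁿ, g)^(1/n)`.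

The Riemannian manifold `(Tⁿ, g)` is encoded as a length metric space `M` homeomorphic to
the `n`-torus; the systole is the infimum of lengths of non-contractible loops, and the
volume is the (normalized) `n`-dimensional Hausdorff measure. -/
theorem torus_systolic_inequality (n : ℕ) (hn : 0 < n) :
    ∃ C : ℝ, 0 < C ∧
      ∀ (M : Type) [MetricSpace M] [MeasurableSpace M] [BorelSpace M],
        Nonempty (M ≃ₜ Torus n) → IsLengthMetric M →
        systole M ≤ ENNReal.ofReal C * rvol n (Set.univ : Set M) ^ ((n : ℝ)⁻¹) := by
  let a : ℝ≥0∞ := unitBallVolume n / 2 ^ n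
  let K : ℝ≥0∞ := ENNReal.ofReal (coloringConst n)
  let C : ℝ≥0∞ := 4 * (K / a) ^ (n : ℝ)⁻¹
  have hn_inv : 0 ≤ (n : ℝ)⁻¹ := by positivity
  have ha_zero : a ≠ 0 := ENNReal.div_ne_zero.2 ⟨unitBallVolume_ne_zero n, by simp⟩
  have ha_top : a ≠ ∞ := ENNReal.div_ne_top ENNReal.ofReal_ne_top (by simp)
  have hK_zero : K ≠ 0 := (ENNReal.ofReal_pos.2 (coloringConst_pos n)).ne'
  have hKa_zero : K / a ≠ 0 := ENNReal.div_ne_zero.2 ⟨hK_zero, ha_top⟩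
  have hKa_top : K / a ≠ ∞ := ENNReal.div_ne_top ENNReal.ofReal_ne_top ha_zero
  have hC_zero : C ≠ 0 := mul_ne_zero (by simp) (by simp [hKa_zero, hKa_top])
  have hC_top : C ≠ ∞ := ENNReal.mul_ne_top (by simp) (ENNReal.rpow_ne_top_of_nonneg hn_inv hKa_top)
  refine ⟨C.toReal, ENNReal.toReal_pos hC_zero hC_top, fun M _ _ _ ⟨h⟩ hM => ?_⟩
  calc systole M ≤ 4 * (K * μH[(n : ℝ)] (univ : Set M)) ^ (n : ℝ)⁻¹ :=
        systole_le_mul_hausdorffMeasure_rpow hn h hM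
    _ = 4 * (K / a * rvol n (univ : Set M)) ^ (n : ℝ)⁻¹ := by
        rw [rvol, ← mul_assoc, ENNReal.div_mul_cancel ha_zero ha_top]
    _ = ENNReal.ofReal C.toReal * rvol n (univ : Set M) ^ (n : ℝ)⁻¹ := by
        rw [ENNReal.ofReal_toReal hC_top, ENNReal.mul_rpow_of_nonneg _ _ hn_inv, mul_assoc]

end
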